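/- Let n_a, n_b ∈ ℤ_{>0} and n_k ∈ ℤ_{≥0}. Let f : ℝ^{n_a} × ℝ^{n_b} → ℝ be a forward input–output model and f_inv : ℝ^{n_a + 1} × ℝ^{n_b − 1} → ℝ an inverse model satisfying, for all Y₀ ∈ ℝ, all (Y₁,…,Y_{n_a}) ∈ ℝ^{n_a}, all u₀ ∈ ℝ and all (U₁,…,U_{n_b−1}) ∈ ℝ^{n_b−1}: f((Y₁,…,Y_{n_a}), (u₀, U₁,…,U_{n_b−1})) = Y₀ if and only if u₀ = f_inv((Y₀, Y₁,…,Y_{n_a}), (U₁,…,U_{n_b−1})). Let r : ℤ → ℝ be a reference, and let the feedforward input u_ff : ℤ → ℝ satisfy, for all k ≥ 0, the recursion u_ff(k) = f_inv((r(k+n_k+1), r(k+n_k), …, r(k+n_k−n_a+1)), (u_ff(k−1), …, u_ff(k−n_b+1))). Suppose ŷ : ℤ → ℝ satisfies the initial conditions ŷ(i) = r(i) for all i ∈ {n_k−n_a+1, …, n_k} and the forward model recursion ŷ(k) = f((ŷ(k−1), …, ŷ(k−n_a)), (u_ff(k−n_k−1), …, u_ff(k−n_k−n_b))) for all k ≥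 n_k+1. Then ŷ(k) = r(k) for all k ≥ n_k−n_a+1. -/

import Mathlib

/-- Inverse model-based feedforward achieves exact tracking of the reference by the model
output. `f` is the forward input–output model, `f_inv` the (unique) inverse relation solving
for the most recent input, `r` the reference, `u_ff` the feedforward input generated by the
inverse model-based controller, and `ŷ` the model output under `u_ff` with matching initial
conditions. -/
theorem inverse_model_feedforward_exact_tracking
    (na nb : ℕ) (hna : 0 < na) (hnb : 0 < nb) (nk : ℕ)
    (f : (Fin na → ℝ) → (Fin nb → ℝ) → ℝ)
    (f_inv : (Fin (na + 1) → ℝ) → (Fin (nb - 1) → ℝ) → ℝ)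
    (hcast : nb = nb - 1 + 1)
    (hinv : ∀ (Y0 : ℝ) (Y : Fin na → ℝ) (u0 : ℝ) (U : Fin (nb - 1) → ℝ),
      f Y (Fin.cons u0 U ∘ Fin.cast hcast) = Y0 ↔ u0 = f_inv (Fin.cons Y0 Y) U)
    (r u_ff yhat : ℤ → ℝ)
    (huff : ∀ k : ℤ, 0 ≤ k →
      u_ff k = f_inv (fun i : Fin (na + 1) => r (k + nk + 1 - (i : ℕ)))
                     (fun j : Fin (nb - 1) => u_ff (k - 1 - (j : ℕ))))
    (hinit : ∀ i : ℤ, (nk : ℤ) - na + 1 ≤ i → i ≤ (nk : ℤ) → yhat i = r i)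
    (hfwd : ∀ k : ℤ, (nk : ℤ) + 1 ≤ k →
      yhat k = f (fun i : Fin na => yhat (k - 1 - (i : ℕ)))
                 (fun j : Fin nb => u_ff (k - nk - 1 - (j : ℕ)))) :
    ∀ k : ℤ, (nk : ℤ) - na + 1 ≤ k → yhat k = r k := by
  have key : ∀ n : ℕ, ∀ k : ℤ, (nk : ℤ) - na + 1 ≤ k → k ≤ (nk : ℤ) + n → yhat k = r k := by
    intro n
    induction n with
    | zero =>
      intro k h1 h2
      exact hinit k h1 (by simpa using h2)
    | succ n ih =>
      intro k h1 h2
      push_cast at h2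
      by_cases hk : k ≤ (nk : ℤ) + n
      · exact ih k h1 hk
      have hY : (fun i : Fin na => yhat (k - 1 - (i : ℕ))) =
          (fun i : Fin na => r (k - 1 - (i : ℕ))) := by
        funext i
        have hi := i.isLt
        exact ih _ (by omega) (by omega)
      have hU : (fun j : Fin nb => u_ff (k - nk - 1 - (j : ℕ))) =
          (Fin.cons (u_ff (k - nk - 1))
            (fun j : Fin (nb - 1) => u_ff (k - nk - 1 - 1 - (j : ℕ))) : Fin (nb - 1 + 1) → ℝ)
            ∘ Fin.cast hcast := by
        funext j
        obtain ⟨j, hj⟩ := j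
        cases j with
        | zero =>
          change _ = u_ff (k - nk - 1)
          simp
        | succ j =>
          change _ = u_ff (k - nk - 1 - 1 - (j : ℕ))
          congr 1
          push_cast
          ring
      rw [hfwd k (by omega), hY, hU]
      refine (hinv _ _ _ _).2 ?_
      rw [huff (k - nk - 1) (by omega)]
      congr 1
      funext i
      refine Fin.cases ?_ (fun i => ?_) i
      · simp only [Fin.cons_zero]
        congr 1
        simp
        ring
      · simp only [Fin.cons_succ]
        congr 1
        simp only [Fin.val_succ]
        push_cast
        ring
  intro k hk
  exact key (k - nk).toNat k hk (by omega)
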